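/- Let λ₁ and λ₂ be Dyck words of semilengths n₁ and n₂ respectively, and let λ := λ₁λ₂ be their concatenation (a Dyck word of semilength n₁+n₂). Then the LS generating polynomials satisfy P_λ = [n₁+n₂ choose n₁] · P_{λ₁} · P_{λ₂} in ℤ[q]. -/

import Mathlib

/-!
Dyck words, chords, nesting, capacities and Lascoux–Schützenberger labellings.
A step is a `Bool`: `true` = U (up), `false` = D (down).
-/

open scoped BigOperators Classical

noncomputable section

/-- The height (#U − #D) of the prefix of length `k`. -/
def heightAt (l : List Bool) (k : ℕ) : ℤ :=
  ((l.take k).count true : ℤ) - ((l.take k).count false : ℤ)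

/-- `l` is a Dyck word: equally many U's and D's, and every prefix has at least
as many U's as D's. -/
def IsDyckWord (l : List Bool) : Prop :=
  l.count true = l.count false ∧
    ∀ k, (l.take k).count false ≤ (l.take k).count true

/-- `(i,j)` is a chord of `l` (0-indexed matched pair of a U at `i` and a D at `j`
under the standard parenthesis matching). -/
def IsChord (l : List Bool) (i j : ℕ) : Prop :=
  i < j ∧ j < l.length ∧ l.getD i false = true ∧ l.getD j true = false ∧
    heightAt l (j + 1) = heightAt l i ∧
    ∀ k ∈ Finset.Icc (i + 1) j, heightAt l i < heightAt l k

/-- The finset of chords of `l`. -/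
def chords (l : List Bool) : Finset (ℕ × ℕ) :=
  (Finset.range l.length ×ˢ Finset.range l.length).filter fun p => IsChord l p.1 p.2

/-- `c' = (i',j')` is nested in `c = (i,j)` iff `i < i' < j' < j`. -/
def NestedIn (c' c : ℕ × ℕ) : Prop :=
  c.1 < c'.1 ∧ c'.1 < c'.2 ∧ c'.2 < c.2

/-- The length `l(c)` of a chord: one plus the number of chords nested in it. -/
def chordLen (l : List Bool) (c : ℕ × ℕ) : ℕ :=
  1 + ((chords l).filter fun c' => NestedIn c' c).card

/-- The capacity of a chord: the number of D's strictly before its opening position. -/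
def cap (l : List Bool) (c : ℕ × ℕ) : ℕ := (l.take c.1).count false

/-- LS-labellings of `l`: functions on chords (encoded as functions on `ℕ × ℕ`
vanishing off the chords) which weakly increase under nesting and are bounded by
the capacity on leaf chords. -/
def LSLabellings (l : List Bool) : Set ((ℕ × ℕ) → ℕ) :=
  {f | (∀ c, c ∉ chords l → f c = 0) ∧
       (∀ c ∈ chords l, ∀ c' ∈ chords l, NestedIn c' c → f c ≤ f c') ∧
       (∀ c ∈ chords l, (∀ c' ∈ chords l, ¬ NestedIn c' c) → f c ≤ cap l c)}


/-- The field ℚ(q). -/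
abbrev K : Type := RatFunc ℚ

/-- The variable q. -/
def qq : K := RatFunc.X

/-- The quantum integer [n] = 1 + q + ⋯ + q^{n-1}. -/
def qint (n : ℕ) : K := ∑ i ∈ Finset.range n, qq ^ i

/-- The quantum factorial [n]! = [1][2]⋯[n]. -/
def qfact (n : ℕ) : K := ∏ i ∈ Finset.range n, qint (i + 1)

/-- The Gaussian binomial coefficient [n choose k] = [n]!/([k]!·[n-k]!). -/
def qbinom (n k : ℕ) : K :=
  if k ≤ n then qfact n / (qfact k * qfact (n - k)) else 0

/-- The LS generating polynomial P_λ = Σ_f q^{Σ_c f(c)}, summed over all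
LS-labellings f of λ, viewed in ℚ(q). -/
def PLSK (l : List Bool) : K :=
  ∑ᶠ f ∈ LSLabellings l, qq ^ (∑ c ∈ chords l, f c)

/-!
Every chord contains a leaf of the same capacity, namely the one formed at the first D after its
opening. Hence the LS-labellings of `λ` are exactly the monotone functions on the poset of chords
(outer chords below) that are bounded by the capacity at every chord. The chords of `λ₁λ₂` form the
disjoint union of those of `λ₁` and `λ₂`, the capacities of the latter being raised by `n₁`, so it
suffices that raising all capacities of a Dyck word of semilength `n` by `m` multiplies its
generating polynomial by `[m+n choose m]`. This follows by induction on the first-return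
decomposition `λ = U λ₁ D λ₂`. An outer chord is a new bottom element: its label is `0`, or `1` can
be subtracted from all labels, which is the `q`-Pascal rule. The concatenation step is the identity
`[m+a choose m] [m+a+b choose m+a] = [m+a+b choose m] [a+b choose a]`.
-/

section OrderIso

variable {α β γ : Type*} [PartialOrder α] [PartialOrder β] [PartialOrder γ]

/-- Two order embeddings with incomparable ranges that cover `γ` exhibit `γ` as a disjoint union
of posets. -/
def sumOrderIsoOfEmbeddings (f : α ↪o γ) (g : β ↪o γ) (hfg : ∀ a b, ¬ f a ≤ g b)
    (hgf : ∀ a b, ¬ g b ≤ f a) (hcover : ∀ c, c ∈ Set.range f ∨ c ∈ Set.range g) : α ⊕ β ≃o γ :=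
  RelIso.ofSurjective
    (OrderEmbedding.ofMapLEIff (Sum.elim f g) (by
      rintro (a | a) (b | b)
      · simp
      · simpa using hfg a b
      · simpa using hgf b a
      · simp))
    (fun c => by
      rcases hcover c with ⟨a, rfl⟩ | ⟨b, rfl⟩
      exacts [⟨Sum.inl a, rfl⟩, ⟨Sum.inr b, rfl⟩])

/-- An order embedding `f` whose range misses only `r`, where `r` lies strictly below the range,
exhibits its codomain as `WithBot α`. -/
def withBotOrderIsoOfEmbedding (r : γ) (f : α ↪o γ) (hr : ∀ a, r < f a)
    (hcover : ∀ c, c = r ∨ c ∈ Set.range f) : WithBot α ≃o γ :=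
  RelIso.ofSurjective
    (OrderEmbedding.ofMapLEIff (WithBot.recBotCoe r f) (WithBot.forall.2
      ⟨WithBot.forall.2 ⟨by simp, fun a => by simp [(hr a).le]⟩,
        fun a => WithBot.forall.2 ⟨by simp [(hr a).not_ge], fun b => by simp⟩⟩))
    (fun c => by
      rcases hcover c with rfl | ⟨a, rfl⟩
      exacts [⟨⊥, rfl⟩, ⟨a, rfl⟩])

end OrderIso

section BoundedMonotone

theorem monotone_sum_iff {α β γ : Type*} [Preorder α] [Preorder β] [Preorder γ] {f : α ⊕ β → γ} :
    Monotone f ↔ Monotone (f ∘ Sum.inl) ∧ Monotone (f ∘ Sum.inr) := by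
  refine ⟨fun hf => ⟨hf.comp Sum.inl_mono, hf.comp Sum.inr_mono⟩, ?_⟩
  rintro ⟨hl, hr⟩ _ _ (⟨hab⟩ | ⟨hab⟩)
  exacts [hl hab, hr hab]

theorem card_withBot {α : Type*} [Fintype α] :
    Fintype.card (WithBot α) = Fintype.card α + 1 :=
  Fintype.card_option

theorem sum_withBot {α M : Type*} [Fintype α] [AddCommMonoid M] (f : WithBot α → M) :
    ∑ a, f a = f ⊥ + ∑ a : α, f a :=
  Fintype.sum_option f

variable {α β R : Type*} [Fintype α] [Preorder α] [Fintype β] [Preorder β] [CommSemiring R]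

/-- The finset of monotone functions `f : α → ℕ` with `f ≤ u`: the reverse `P`-partitions of the
preorder `α` with upper bounds `u`. -/
def boundedMonotone (u : α → ℕ) : Finset (α → ℕ) := (Finset.Iic u).filter Monotone

/-- The generating function `∑_f q ^ (∑_a f a)` of the monotone functions `f ≤ u`. The LS generating
polynomial of a word is the case where `α` is the poset of chords and `u` is the capacity. -/
def boundedMonotoneGF (q : R) (u : α → ℕ) : R := ∑ f ∈ boundedMonotone u, q ^ ∑ a, f a

theorem mem_boundedMonotone {u f : α → ℕ} : f ∈ boundedMonotone u ↔ f ≤ u ∧ Monotone f := by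
  simp [boundedMonotone]

theorem boundedMonotoneGF_comp_orderIso (q : R) (e : α ≃o β) (u : β → ℕ) :
    boundedMonotoneGF q (u ∘ e) = boundedMonotoneGF q u := by
  refine Finset.sum_bij' (fun f _ => f ∘ e.symm) (fun g _ => g ∘ e) ?_ ?_ ?_ ?_ ?_
  · intro f hf
    rw [mem_boundedMonotone] at hf ⊢
    exact ⟨fun b => by simpa using hf.1 (e.symm b), hf.2.comp e.symm.monotone⟩
  · intro g hg
    rw [mem_boundedMonotone] at hg ⊢
    exact ⟨fun a => hg.1 (e a), hg.2.comp e.monotone⟩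
  · exact fun f _ => funext fun a => by simp
  · exact fun g _ => funext fun b => by simp
  · exact fun f _ => congrArg (q ^ ·) (e.symm.toEquiv.sum_comp f).symm

theorem boundedMonotoneGF_sumElim (q : R) (u : α → ℕ) (v : β → ℕ) :
    boundedMonotoneGF q (Sum.elim u v) = boundedMonotoneGF q u * boundedMonotoneGF q v := by
  unfold boundedMonotoneGF
  rw [Finset.sum_mul_sum, ← Finset.sum_product']
  refine Finset.sum_equiv (Equiv.sumArrowEquivProdArrow α β ℕ) (fun f => ?_) (fun f _ => ?_)
  · simp only [Finset.mem_product, mem_boundedMonotone, monotone_sum_iff, Pi.le_def, Sum.forall,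
      Sum.elim_inl, Sum.elim_inr, Equiv.sumArrowEquivProdArrow, Equiv.coe_fn_mk,
      Function.comp_apply]
    tauto
  · rw [Fintype.sum_sum_type, pow_add]
    rfl

theorem sum_boundedMonotone_bot_ne_zero [OrderBot α] (q : R) (u : α → ℕ) :
    ∑ f ∈ boundedMonotone (u + 1) with f ⊥ ≠ 0, q ^ ∑ a, f a =
      q ^ Fintype.card α * boundedMonotoneGF q u := by
  rw [boundedMonotoneGF, Finset.mul_sum]
  symm
  refine Finset.sum_bij' (fun f _ => f + 1) (fun g _ => g - 1) ?_ ?_ ?_ ?_ ?_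
  · intro f hf
    rw [mem_boundedMonotone] at hf
    rw [Finset.mem_filter, mem_boundedMonotone]
    exact ⟨⟨add_le_add_left hf.1 1, hf.2.add_const 1⟩, Nat.succ_ne_zero _⟩
  · intro g hg
    rw [Finset.mem_filter, mem_boundedMonotone] at hg
    rw [mem_boundedMonotone]
    exact ⟨fun a => Nat.sub_le_of_le_add (hg.1.1 a),
      fun a b hab => Nat.sub_le_sub_right (hg.1.2 hab) 1⟩
  · exact fun f _ => funext fun a => Nat.add_sub_cancel _ _
  · intro g hg
    rw [Finset.mem_filter, mem_boundedMonotone] at hg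
    have one_le_bot : 1 ≤ g ⊥ := Nat.one_le_iff_ne_zero.2 hg.2
    exact funext fun a => Nat.sub_add_cancel (one_le_bot.trans (hg.1.2 bot_le))
  · intro f _
    simp [Finset.sum_add_distrib, pow_add, mul_comm]

theorem sum_boundedMonotone_bot_eq_zero (q : R) (u : WithBot α → ℕ) :
    ∑ f ∈ boundedMonotone u with f ⊥ = 0, q ^ ∑ a, f a =
      boundedMonotoneGF q (fun a : α => u a) := by
  refine Finset.sum_bij' (fun f _ a => f a) (fun g _ => WithBot.recBotCoe 0 g) ?_ ?_ ?_ ?_ ?_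
  · intro f hf
    rw [Finset.mem_filter, mem_boundedMonotone] at hf
    rw [mem_boundedMonotone]
    exact ⟨fun a => hf.1.1 a, hf.1.2.comp WithBot.coe_mono⟩
  · intro g hg
    rw [mem_boundedMonotone] at hg
    rw [Finset.mem_filter, mem_boundedMonotone, WithBot.monotone_iff]
    exact ⟨⟨WithBot.forall.2 ⟨Nat.zero_le _, hg.1⟩, hg.2, fun _ => Nat.zero_le _⟩, rfl⟩
  · intro f hf
    have bot_eq_zero := (Finset.mem_filter.1 hf).2
    exact funext <| WithBot.forall.2 ⟨bot_eq_zero.symm, fun _ => rfl⟩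
  · exact fun _ _ => rfl
  · intro f hf
    have bot_eq_zero := (Finset.mem_filter.1 hf).2
    rw [sum_withBot, bot_eq_zero, zero_add]

theorem boundedMonotoneGF_withBot_of_bot_eq_zero (q : R) {u : WithBot α → ℕ} (hu : u ⊥ = 0) :
    boundedMonotoneGF q u = boundedMonotoneGF q (fun a : α => u a) := by
  rw [← sum_boundedMonotone_bot_eq_zero, Finset.filter_true_of_mem, boundedMonotoneGF]
  intro f hf
  exact Nat.le_zero.1 (hu ▸ (mem_boundedMonotone.1 hf).1 ⊥)

theorem boundedMonotoneGF_withBot_add_one (q : R) (u : WithBot α → ℕ) :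
    boundedMonotoneGF q (u + 1) = boundedMonotoneGF q (fun a : α => u a + 1) +
      q ^ (Fintype.card α + 1) * boundedMonotoneGF q u := by
  rw [← card_withBot, ← sum_boundedMonotone_bot_ne_zero,
    show (fun a : α => u a + 1) = fun a : α => (u + 1) a from rfl,
    ← sum_boundedMonotone_bot_eq_zero q (u + 1)]
  exact (Finset.sum_filter_add_sum_filter_not _ _ _).symm

end BoundedMonotone

section QBinomial

theorem qint_add (m n : ℕ) : qint (m + n) = qint m + qq ^ m * qint n := by
  simp only [qint, Finset.sum_range_add, Finset.mul_sum, pow_add]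

theorem qint_succ_ne_zero (n : ℕ) : qint (n + 1) ≠ 0 := by
  have qint_eq : qint (n + 1) = algebraMap (Polynomial ℚ) K
      (∑ i ∈ Finset.range (n + 1), Polynomial.X ^ i) := by
    simp [qint, qq]
  rw [qint_eq, Ne, map_eq_zero_iff _ (RatFunc.algebraMap_injective ℚ)]
  intro h
  have eval_one := congrArg (Polynomial.eval 1) h
  simp only [Polynomial.eval_finsetSum, Polynomial.eval_pow, Polynomial.eval_X, one_pow,
    Finset.sum_const, Finset.card_range, nsmul_eq_mul, mul_one, Polynomial.eval_zero] at eval_one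
  exact Nat.cast_ne_zero.2 n.succ_ne_zero eval_one

theorem qfact_zero : qfact 0 = 1 := Finset.prod_range_zero _

theorem qfact_succ (n : ℕ) : qfact (n + 1) = qfact n * qint (n + 1) :=
  Finset.prod_range_succ _ _

theorem qfact_ne_zero (n : ℕ) : qfact n ≠ 0 :=
  Finset.prod_ne_zero_iff.2 fun i _ => qint_succ_ne_zero i

theorem qbinom_add_left (m n : ℕ) : qbinom (m + n) m = qfact (m + n) / (qfact m * qfact n) := by
  rw [qbinom, if_pos (Nat.le_add_right m n), Nat.add_sub_cancel_left]

theorem qbinom_self (n : ℕ) : qbinom n n = 1 := by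
  simpa [qfact_zero, qfact_ne_zero] using qbinom_add_left n 0

theorem qbinom_zero_right (n : ℕ) : qbinom n 0 = 1 := by
  simpa [qfact_zero, qfact_ne_zero] using qbinom_add_left 0 n

theorem qbinom_pascal (m n : ℕ) :
    qbinom (m + 1 + (n + 1)) (m + 1) =
      qbinom (m + 1 + n) (m + 1) + qq ^ (n + 1) * qbinom (m + (n + 1)) m := by
  have fact_total : qfact (m + 1 + (n + 1)) =
      qfact (m + 1 + n) * (qint (n + 1) + qq ^ (n + 1) * qint (m + 1)) := by
    rw [← add_assoc, qfact_succ, ← qint_add]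
    congr 2
    omega
  have hm := qint_succ_ne_zero m
  have hn := qint_succ_ne_zero n
  have hmf := qfact_ne_zero m
  have hnf := qfact_ne_zero n
  rw [qbinom_add_left, qbinom_add_left, qbinom_add_left, fact_total,
    show m + (n + 1) = m + 1 + n by omega, qfact_succ m, qfact_succ n]
  field_simp

theorem qbinom_mul (m a b : ℕ) :
    qbinom (m + a) m * qbinom (m + a + b) (m + a) = qbinom (m + (a + b)) m * qbinom (a + b) a := by
  have ha := qfact_ne_zero (m + a)
  have hb := qfact_ne_zero (a + b)
  rw [qbinom_add_left, qbinom_add_left, qbinom_add_left, qbinom_add_left, add_assoc m a b]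
  field_simp

end QBinomial

section Height

variable {l : List Bool} {k : ℕ}

theorem lt_length_of_down (h : l.getD k true = false) : k < l.length := by
  by_contra! hle
  rw [List.getD_eq_default _ _ hle] at h
  contradiction

theorem heightAt_succ_of_up (h : l.getD k false = true) :
    heightAt l (k + 1) = heightAt l k + 1 := by
  have getElem?_eq : l[k]? = some true := by
    simpa [List.getD_eq_getElem?_getD, Option.getD_eq_iff] using h
  simp [heightAt, List.take_add_one, getElem?_eq, add_sub_right_comm]

theorem heightAt_succ_of_down (h : l.getD k true = false) :
    heightAt l (k + 1) = heightAt l k - 1 := by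
  have getElem?_eq : l[k]? = some false := by
    simpa [List.getD_eq_getElem?_getD, Option.getD_eq_iff] using h
  simp [heightAt, List.take_add_one, getElem?_eq, sub_add_eq_sub_sub]

theorem count_false_take_succ_of_up (h : l.getD k false = true) :
    (l.take (k + 1)).count false = (l.take k).count false := by
  have getElem?_eq : l[k]? = some true := by
    simpa [List.getD_eq_getElem?_getD, Option.getD_eq_iff] using h
  simp [List.take_add_one, getElem?_eq]

theorem heightAt_append_left {a : List Bool} (hk : k ≤ a.length) (b : List Bool) :
    heightAt (a ++ b) k = heightAt a k := by
  rw [heightAt, heightAt, List.take_append_of_le_length hk]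

theorem heightAt_append_add_length (a b : List Bool) (k : ℕ) :
    heightAt (a ++ b) (k + a.length) = heightAt b k + heightAt a a.length := by
  rw [heightAt, add_comm k, List.take_length_add_append]
  simp only [heightAt, List.count_append, List.take_length]
  push_cast
  ring

theorem IsDyckWord.heightAt_nonneg (h : IsDyckWord l) (k : ℕ) : 0 ≤ heightAt l k :=
  sub_nonneg.2 (Nat.cast_le.2 (h.2 k))

theorem IsDyckWord.heightAt_length (h : IsDyckWord l) : heightAt l l.length = 0 := by
  simp [heightAt, h.1]

theorem IsDyckWord.count_false_eq (h : IsDyckWord l) {n : ℕ} (hn : l.length = 2 * n) :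
    l.count false = n := by
  have count_eq := h.1
  have count_add := List.count_true_add_count_false l
  omega

end Height

section Chord

variable {l : List Bool} {i j : ℕ}

theorem mem_chords : (i, j) ∈ chords l ↔ IsChord l i j := by
  simp only [chords, Finset.mem_filter, Finset.mem_product, Finset.mem_range,
    and_iff_right_iff_imp]
  exact fun h => ⟨h.1.trans h.2.1, h.2.1⟩

theorem not_nestedIn_succ (c : ℕ × ℕ) (p : ℕ) : ¬ NestedIn c (p, p + 1) := by
  simp only [NestedIn]
  omega

theorem isChord_succ_iff :
    IsChord l i (i + 1) ↔ l.getD i false = true ∧ l.getD (i + 1) true = false := by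
  refine ⟨fun h => ⟨h.2.2.1, h.2.2.2.1⟩, fun ⟨hup, hdown⟩ => ?_⟩
  have height_peak := heightAt_succ_of_up hup
  refine ⟨i.lt_succ_self, lt_length_of_down hdown, hup, hdown, ?_, ?_⟩
  · rw [heightAt_succ_of_down hdown, height_peak]
    ring
  · simp [height_peak]

theorem exists_first_peak (hij : i < j) (hup : l.getD i false = true)
    (hdown : l.getD j true = false) :
    ∃ p, i ≤ p ∧ p < j ∧ (∀ t, i ≤ t → t ≤ p → l.getD t false = true) ∧
      l.getD (p + 1) true = false := by
  have exists_down : ∃ p, i ≤ p ∧ l.getD (p + 1) true = false :=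
    ⟨j - 1, by omega, by rwa [Nat.sub_add_cancel (by omega)]⟩
  have ⟨le_find, down_find⟩ := Nat.find_spec exists_down
  have find_le : Nat.find exists_down ≤ j - 1 :=
    Nat.find_min' exists_down ⟨by omega, by rwa [Nat.sub_add_cancel (by omega)]⟩
  refine ⟨Nat.find exists_down, le_find, by omega, fun t hit ht => ?_, down_find⟩
  rcases hit.eq_or_lt with rfl | hlt
  · exact hup
  have not_down : l.getD t true ≠ false := fun h =>
    Nat.find_min exists_down (m := t - 1) (by omega)
      ⟨by omega, by rwa [Nat.sub_add_cancel (by omega)]⟩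
  have t_lt_length : t < l.length := by
    have := lt_length_of_down down_find
    omega
  rw [List.getD_eq_getElem _ _ t_lt_length] at not_down ⊢
  exact Bool.eq_true_of_not_eq_false not_down

theorem count_false_take_eq_of_forall_up {p : ℕ} (hip : i ≤ p)
    (hup : ∀ t, i ≤ t → t < p → l.getD t false = true) :
    (l.take p).count false = (l.take i).count false := by
  induction p, hip using Nat.le_induction with
  | base => rfl
  | succ p hip ih =>
    rw [count_false_take_succ_of_up (hup p hip p.lt_succ_self)]
    exact ih fun t hit htp => hup t hit (by omega)

/-- The leaf consists of the first D after position `i` and the U just before it; between them and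
`i` there are only U's, so the capacity does not change. -/
theorem IsChord.exists_leaf (h : IsChord l i j) :
    ∃ p, IsChord l p (p + 1) ∧ ((p, p + 1) = (i, j) ∨ NestedIn (p, p + 1) (i, j)) ∧
      cap l (p, p + 1) = cap l (i, j) := by
  obtain ⟨hij, -, hup, hdown, height_close, height_inside⟩ := h
  obtain ⟨p, hip, hpj, up_run, down_peak⟩ := exists_first_peak hij hup hdown
  have chord_peak := isChord_succ_iff.2 ⟨up_run p hip le_rfl, down_peak⟩
  have height_peak : heightAt l (p + 1 + 1) = heightAt l p := chord_peak.2.2.2.2.1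
  refine ⟨p, chord_peak, ?_, count_false_take_eq_of_forall_up hip fun t hit htp =>
    up_run t hit htp.le⟩
  rcases hip.eq_or_lt with rfl | hlt
  · left
    by_contra hne
    have succ_ne : i + 1 ≠ j := fun heq => hne (heq ▸ rfl)
    have height_lt := height_inside (i + 1 + 1) (Finset.mem_Icc.2 (by omega))
    omega
  · right
    have height_lt := height_inside p (Finset.mem_Icc.2 (by omega))
    have : p + 1 ≠ j := by
      rintro rfl
      omega
    simp only [NestedIn]
    omega

/-- The chords of a word as a type, ordered so that the chords nested in `c` lie above `c`. -/
@[ext]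
structure Chord (l : List Bool) where
  /-- The position of the U. -/
  left : ℕ
  /-- The position of the D. -/
  right : ℕ
  isChord : IsChord l left right

namespace Chord

/-- The two positions of a chord as a pair, the form in which `chords` lists it. -/
def toProd (c : Chord l) : ℕ × ℕ := (c.left, c.right)

theorem toProd_mem_chords (c : Chord l) : c.toProd ∈ chords l := mem_chords.2 c.isChord

/-- The type `Chord l` enumerates the finset `chords l`. -/
def equivChords (l : List Bool) : Chord l ≃ chords l where
  toFun c := ⟨c.toProd, c.toProd_mem_chords⟩
  invFun c := ⟨c.1.1, c.1.2, mem_chords.1 c.2⟩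
  left_inv _ := rfl
  right_inv _ := rfl

instance : Fintype (Chord l) := Fintype.ofEquiv _ (equivChords l).symm

theorem left_lt_right (c : Chord l) : c.left < c.right := c.isChord.1

theorem right_lt_length (c : Chord l) : c.right < l.length := c.isChord.2.1

theorem left_lt_length (c : Chord l) : c.left < l.length := c.left_lt_right.trans c.right_lt_length

instance : PartialOrder (Chord l) where
  le c d := c = d ∨ NestedIn d.toProd c.toProd
  le_refl c := Or.inl rfl
  le_trans := by
    rintro c d e (rfl | hcd) (rfl | hde)
    · exact Or.inl rfl
    · exact Or.inr hde
    · exact Or.inr hcd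
    · exact Or.inr ⟨hcd.1.trans hde.1, hde.2.1, hde.2.2.trans hcd.2.2⟩
  le_antisymm := by
    rintro c d (rfl | hcd) (hdc | hdc)
    · rfl
    · rfl
    · exact hdc.symm
    · exact absurd hcd.1 hdc.1.asymm

theorem le_iff {c d : Chord l} :
    c ≤ d ↔ c.left = d.left ∧ c.right = d.right ∨ c.left < d.left ∧ d.right < c.right := by
  have := d.left_lt_right
  simp only [LE.le, Chord.ext_iff, NestedIn, toProd]
  tauto

/-- The capacity of a chord, as a function on the poset of chords. -/
def capacity (c : Chord l) : ℕ := cap l c.toProd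

theorem mem_LSLabellings_iff {f : ℕ × ℕ → ℕ} :
    f ∈ LSLabellings l ↔ (∀ c, c ∉ chords l → f c = 0) ∧
      (fun c : Chord l => f c.toProd) ∈ boundedMonotone capacity := by
  rw [mem_boundedMonotone]
  refine and_congr_right fun _ => ⟨fun ⟨hmono, hleaf⟩ => ⟨?_, ?_⟩, fun ⟨hcap, hmono⟩ => ⟨?_, ?_⟩⟩
  · intro c
    obtain ⟨p, chord_leaf, hle, cap_eq⟩ := c.isChord.exists_leaf
    calc
      f c.toProd ≤ f (p, p + 1) := by
        rcases hle with heq | hnested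
        · exact (congrArg f heq).ge
        · exact hmono _ c.toProd_mem_chords _ (mem_chords.2 chord_leaf) hnested
      _ ≤ cap l (p, p + 1) :=
        hleaf _ (mem_chords.2 chord_leaf) fun d _ => not_nestedIn_succ d p
      _ = c.capacity := cap_eq
  · rintro c d (rfl | hnested)
    · exact le_rfl
    · exact hmono _ c.toProd_mem_chords _ d.toProd_mem_chords hnested
  · exact fun c hc d hd hnested => hmono (a := ⟨c.1, c.2, mem_chords.1 hc⟩)
      (b := ⟨d.1, d.2, mem_chords.1 hd⟩) (Or.inr hnested)
  · exact fun c hc _ => hcap ⟨c.1, c.2, mem_chords.1 hc⟩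

theorem PLSK_eq_boundedMonotoneGF (l : List Bool) :
    PLSK l = boundedMonotoneGF qq (capacity (l := l)) := by
  have bijOn_restrict : Set.BijOn (fun f (c : Chord l) => f c.toProd) (LSLabellings l)
      (boundedMonotone capacity : Finset (Chord l → ℕ)) := by
    refine ⟨fun f hf => (mem_LSLabellings_iff.1 hf).2, fun f hf g hg hfg => ?_, fun g hg => ?_⟩
    · funext c
      by_cases hc : c ∈ chords l
      · exact congrFun hfg ⟨c.1, c.2, mem_chords.1 hc⟩
      · rw [hf.1 c hc, hg.1 c hc]
    · let extend : ℕ × ℕ → ℕ := fun c =>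
        if hc : c ∈ chords l then g ⟨c.1, c.2, mem_chords.1 hc⟩ else 0
      have restrict_extend : (fun c : Chord l => extend c.toProd) = g :=
        funext fun c => dif_pos c.toProd_mem_chords
      refine ⟨extend, mem_LSLabellings_iff.2 ⟨fun c hc => dif_neg hc, ?_⟩, restrict_extend⟩
      rwa [restrict_extend]
  rw [PLSK, boundedMonotoneGF, ← finsum_mem_coe_finset]
  refine finsum_mem_eq_of_bijOn _ bijOn_restrict fun f _ => ?_
  rw [← Finset.sum_coe_sort, ← (equivChords l).sum_comp]
  rfl

end Chord

end Chord

section Infix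

variable {a b l w : List Bool} {i j k : ℕ}

theorem heightAt_infix (hk : k ≤ l.length) :
    heightAt (a ++ l ++ b) (k + a.length) = heightAt l k + heightAt a a.length := by
  rw [List.append_assoc, heightAt_append_add_length, heightAt_append_left hk]

theorem getD_infix (hk : k < l.length) (d : Bool) :
    (a ++ l ++ b).getD (k + a.length) d = l.getD k d := by
  rw [List.append_assoc, List.getD_append_right _ _ _ _ (Nat.le_add_left _ _),
    Nat.add_sub_cancel, List.getD_append _ _ _ _ hk]

theorem isChord_infix_iff (hij : i < j) (hj : j < l.length) :
    IsChord (a ++ l ++ b) (i + a.length) (j + a.length) ↔ IsChord l i j := by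
  have height_inside : (∀ k ∈ Finset.Icc (i + a.length + 1) (j + a.length),
        heightAt (a ++ l ++ b) (i + a.length) < heightAt (a ++ l ++ b) k) ↔
      ∀ k ∈ Finset.Icc (i + 1) j, heightAt l i < heightAt l k := by
    rw [Nat.add_right_comm, ← Finset.image_add_right_Icc, Finset.forall_mem_image]
    refine forall₂_congr fun k hk => ?_
    rw [heightAt_infix (by omega), heightAt_infix ((Finset.mem_Icc.1 hk).2.trans hj.le),
      add_lt_add_iff_right]
  have hlen : j + a.length < (a ++ l ++ b).length := by
    simp only [List.length_append]
    omega
  rw [IsChord, IsChord, height_inside, getD_infix (hij.trans hj), getD_infix hj,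
    Nat.add_right_comm j, heightAt_infix hj, heightAt_infix (by omega), add_left_inj,
    Nat.add_lt_add_iff_right]
  simp only [hlen, hj]

theorem cap_infix (hi : i ≤ l.length) :
    cap (a ++ l ++ b) (i + a.length, j + a.length) = cap l (i, j) + a.count false := by
  rw [cap, cap, List.append_assoc, add_comm i, List.take_length_add_append, List.count_append,
    List.take_append_of_le_length hi, add_comm]

namespace Chord

/-- The chords of a factor `l` of the word `w = a ++ l ++ b`, as chords of `w`. -/
def ofInfix (h : a ++ l ++ b = w) : Chord l ↪o Chord w :=
  OrderEmbedding.ofMapLEIff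
    (fun c => ⟨c.left + a.length, c.right + a.length,
      h ▸ (isChord_infix_iff c.left_lt_right c.right_lt_length).2 c.isChord⟩)
    (fun c d => by simp [le_iff])

theorem left_ofInfix (h : a ++ l ++ b = w) (c : Chord l) :
    (ofInfix h c).left = c.left + a.length := rfl

theorem right_ofInfix (h : a ++ l ++ b = w) (c : Chord l) :
    (ofInfix h c).right = c.right + a.length := rfl

theorem capacity_ofInfix (h : a ++ l ++ b = w) (c : Chord l) :
    (ofInfix h c).capacity = c.capacity + a.count false := by
  subst h
  exact cap_infix c.left_lt_length.le

theorem mem_range_ofInfix (h : a ++ l ++ b = w) {c : Chord w} (hl : a.length ≤ c.left)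
    (hr : c.right < l.length + a.length) : c ∈ Set.range (ofInfix h) := by
  subst h
  obtain ⟨i, j, hc⟩ := c
  obtain ⟨i, rfl⟩ := Nat.exists_eq_add_of_le' hl
  obtain ⟨j, rfl⟩ := Nat.exists_eq_add_of_le' (hl.trans hc.1.le)
  exact ⟨⟨i, j, (isChord_infix_iff (Nat.lt_of_add_lt_add_right hc.1)
    (Nat.lt_of_add_lt_add_right hr)).1 hc⟩, rfl⟩

end Chord

end Infix

section Append

variable {l₁ : List Bool} (l₂ : List Bool)

/-- A chord starting in `l₁` and ending in `l₂` would start below height `0`. -/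
theorem IsDyckWord.closing_lt_length (h : IsDyckWord l₁) {i j : ℕ}
    (hc : IsChord (l₁ ++ l₂) i j) (hi : i < l₁.length) : j < l₁.length := by
  by_contra! hj
  have height_lt := hc.2.2.2.2.2 l₁.length (Finset.mem_Icc.2 ⟨hi, hj⟩)
  rw [heightAt_append_left hi.le, heightAt_append_left le_rfl, h.heightAt_length] at height_lt
  exact height_lt.not_ge (h.heightAt_nonneg i)

namespace Chord

/-- The chords of a concatenation `l₁ ++ l₂`, with `l₁` a Dyck word, form the disjoint union of the
posets of chords of `l₁` and `l₂`. -/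
def sumOrderIsoAppend (h : IsDyckWord l₁) : Chord l₁ ⊕ Chord l₂ ≃o Chord (l₁ ++ l₂) :=
  sumOrderIsoOfEmbeddings
    (ofInfix (a := []) (b := l₂) rfl)
    (ofInfix (a := l₁) (b := []) (List.append_nil _))
    (fun c d => by
      have := c.left_lt_length
      have := c.right_lt_length
      rw [le_iff, left_ofInfix, left_ofInfix, right_ofInfix, right_ofInfix, List.length_nil]
      omega)
    (fun c d => by
      have := c.left_lt_length
      rw [le_iff, left_ofInfix, left_ofInfix, right_ofInfix, right_ofInfix, List.length_nil]
      omega)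
    (fun c => by
      rcases lt_or_ge c.left l₁.length with hlt | hge
      · exact Or.inl <| mem_range_ofInfix rfl (Nat.zero_le _) (h.closing_lt_length l₂ c.isChord hlt)
      · refine Or.inr <| mem_range_ofInfix (List.append_nil _) hge ?_
        simpa only [List.length_append, add_comm] using c.right_lt_length)

theorem capacity_sumOrderIsoAppend_inl (h : IsDyckWord l₁) (c : Chord l₁) :
    capacity (sumOrderIsoAppend l₂ h (Sum.inl c)) = capacity c :=
  capacity_ofInfix (a := []) (b := l₂) rfl c

theorem capacity_sumOrderIsoAppend_inr (h : IsDyckWord l₁) (c : Chord l₂) :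
    capacity (sumOrderIsoAppend l₂ h (Sum.inr c)) = capacity c + l₁.count false :=
  capacity_ofInfix (a := l₁) (b := []) (List.append_nil _) c

end Chord

end Append

/-- The word `U l D`, which encloses `l` in an outer chord when `l` is a Dyck word. -/
def nest (l : List Bool) : List Bool := [true] ++ l ++ [false]

section Nest

variable {l : List Bool} {i j : ℕ}

theorem nest_eq (l : List Bool) : nest l = [true] ++ l ++ [false] := rfl

theorem count_false_nest (l : List Bool) : (nest l).count false = l.count false + 1 := by
  simp [nest]

theorem length_nest (l : List Bool) : (nest l).length = l.length + 2 := by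
  simp [nest]

theorem heightAt_nest_succ {k : ℕ} (hk : k ≤ l.length) :
    heightAt (nest l) (k + 1) = heightAt l k + 1 :=
  heightAt_infix hk

theorem IsDyckWord.heightAt_nest_length (h : IsDyckWord l) :
    heightAt (nest l) (l.length + 2) = 0 := by
  rw [← length_nest, heightAt, List.take_length]
  simp [nest, h.1]

theorem IsDyckWord.isChord_nest_root (h : IsDyckWord l) :
    IsChord (nest l) 0 (l.length + 1) := by
  refine ⟨Nat.succ_pos _, by simp [nest], rfl, by simp [nest], h.heightAt_nest_length, ?_⟩
  intro k hk
  obtain ⟨hk_pos, hk_le⟩ := Finset.mem_Icc.1 hk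
  obtain ⟨k, rfl⟩ := Nat.exists_eq_succ_of_ne_zero (Nat.one_le_iff_ne_zero.1 hk_pos)
  have := h.heightAt_nonneg k
  have height_zero : heightAt (nest l) 0 = 0 := rfl
  rw [Nat.succ_eq_add_one, heightAt_nest_succ (by omega)]
  omega

theorem IsDyckWord.isChord_nest_cases (h : IsDyckWord l) (hc : IsChord (nest l) i j) :
    i = 0 ∧ j = l.length + 1 ∨ 1 ≤ i ∧ j < l.length + 1 := by
  obtain ⟨hij, hj, -, -, height_close, -⟩ := hc
  rw [length_nest] at hj
  rcases i with _ | i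
  · refine Or.inl ⟨rfl, ?_⟩
    by_contra hne
    have := h.heightAt_nonneg j
    rw [heightAt_nest_succ (by omega)] at height_close
    have height_zero : heightAt (nest l) 0 = 0 := rfl
    omega
  · refine Or.inr ⟨Nat.succ_pos i, ?_⟩
    by_contra! hge
    obtain rfl : j = l.length + 1 := by omega
    have := h.heightAt_nonneg i
    rw [h.heightAt_nest_length, heightAt_nest_succ (by omega)] at height_close
    omega

/-- The chords of `U l D` are those of `l` together with a bottom element, the outer chord. -/
def Chord.withBotOrderIsoNest (h : IsDyckWord l) : WithBot (Chord l) ≃o Chord (nest l) :=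
  withBotOrderIsoOfEmbedding
    ⟨0, l.length + 1, h.isChord_nest_root⟩
    (ofInfix (nest_eq l).symm)
    (fun c => by
      have := c.right_lt_length
      have left_eq := left_ofInfix (nest_eq l).symm c
      have right_eq := right_ofInfix (nest_eq l).symm c
      simp only [lt_iff_le_not_ge, le_iff, left_eq, right_eq, List.length_singleton]
      omega)
    (fun c => (h.isChord_nest_cases c.isChord).imp (fun ⟨hl, hr⟩ => Chord.ext hl hr)
      fun ⟨hl, hr⟩ => mem_range_ofInfix (nest_eq l).symm hl hr)

theorem Chord.capacity_withBotOrderIsoNest_bot (h : IsDyckWord l) :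
    capacity (withBotOrderIsoNest h ⊥) = 0 := rfl

theorem Chord.capacity_withBotOrderIsoNest_coe (h : IsDyckWord l) (c : Chord l) :
    capacity (withBotOrderIsoNest h c) = capacity c :=
  capacity_ofInfix (nest_eq l).symm c

end Nest

section DyckInduction

/-- The letter of a `DyckStep` in the encoding of words by `Bool`. -/
def stepEquiv : DyckStep ≃ Bool where
  toFun | .U => true | .D => false
  invFun | true => .U | false => .D
  left_inv s := by cases s <;> rfl
  right_inv b := by cases b <;> rfl

theorem isDyckWord_map_stepEquiv (p : DyckWord) : IsDyckWord (p.toList.map stepEquiv) := by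
  have count_map := fun s (l : List DyckStep) =>
    List.count_map_of_injective l stepEquiv stepEquiv.injective s
  refine ⟨?_, fun k => ?_⟩
  · exact (count_map .U _).trans (p.count_U_eq_count_D.trans (count_map .D _).symm)
  · rw [← List.map_take]
    exact (count_map .D _).trans_le ((p.count_D_le_count_U k).trans (count_map .U _).ge)

variable {l : List Bool}

theorem IsDyckWord.exists_dyckWord (h : IsDyckWord l) :
    ∃ p : DyckWord, p.toList.map stepEquiv = l := by
  have count_map := fun b (l : List Bool) =>
    List.count_map_of_injective l stepEquiv.symm stepEquiv.symm.injective b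
  refine ⟨⟨l.map stepEquiv.symm, ?_, fun k => ?_⟩, by simp⟩
  · exact (count_map true _).trans (h.1.trans (count_map false _).symm)
  · rw [← List.map_take]
    exact (count_map false _).trans_le ((h.2 k).trans (count_map true _).ge)

theorem IsDyckWord.induction {P : List Bool → Prop} (nil : P [])
    (nest_append : ∀ l₁ l₂, IsDyckWord l₁ → IsDyckWord l₂ → P l₁ → P l₂ → P (nest l₁ ++ l₂))
    (h : IsDyckWord l) : P l := by
  have ofTree (t : BinaryTree Unit) : P ((DyckWord.ofTree t).toList.map stepEquiv) := by
    induction t with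
    | nil => exact nil
    | node _ t₁ t₂ ih₁ ih₂ =>
      have nest_append_t := nest_append _ _ (isDyckWord_map_stepEquiv _)
        (isDyckWord_map_stepEquiv _) ih₁ ih₂
      have toList_node : (DyckWord.ofTree (.node () t₁ t₂)).toList =
          [.U] ++ (DyckWord.ofTree t₁).toList ++ [.D] ++ (DyckWord.ofTree t₂).toList := rfl
      rw [toList_node]
      simpa [nest, stepEquiv] using nest_append_t
  obtain ⟨p, rfl⟩ := h.exists_dyckWord
  simpa only [DyckWord.ofTree_toTree] using ofTree p.toTree

theorem isDyckWord_nest (h : IsDyckWord l) : IsDyckWord (nest l) := by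
  obtain ⟨p, rfl⟩ := h.exists_dyckWord
  simpa [DyckWord.nest, nest, stepEquiv] using isDyckWord_map_stepEquiv p.nest

end DyckInduction

section RaisedGF

variable {l l₁ l₂ : List Bool}

/-- The generating polynomial of the LS-labellings of `l` whose capacities are all raised by `m`, as
they are when `l` is appended to a Dyck word of semilength `m`. -/
def raisedGF (l : List Bool) (m : ℕ) : K :=
  boundedMonotoneGF qq fun c : Chord l => c.capacity + m

theorem PLSK_eq_raisedGF_zero (l : List Bool) : PLSK l = raisedGF l 0 :=
  Chord.PLSK_eq_boundedMonotoneGF l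

theorem raisedGF_append (h : IsDyckWord l₁) (l₂ : List Bool) (m : ℕ) :
    raisedGF (l₁ ++ l₂) m = raisedGF l₁ m * raisedGF l₂ (m + l₁.count false) := by
  rw [raisedGF, raisedGF, raisedGF, ← boundedMonotoneGF_sumElim,
    ← boundedMonotoneGF_comp_orderIso qq (Chord.sumOrderIsoAppend l₂ h)]
  congr 1
  funext c
  rcases c with c | c
  · simp [Chord.capacity_sumOrderIsoAppend_inl]
  · simp only [Function.comp_apply, Chord.capacity_sumOrderIsoAppend_inr, Sum.elim_inr]
    omega

theorem raisedGF_nest_zero (h : IsDyckWord l) : raisedGF (nest l) 0 = raisedGF l 0 := by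
  rw [raisedGF, ← boundedMonotoneGF_comp_orderIso qq (Chord.withBotOrderIsoNest h),
    boundedMonotoneGF_withBot_of_bot_eq_zero qq (Chord.capacity_withBotOrderIsoNest_bot h)]
  simp only [Function.comp_apply, Chord.capacity_withBotOrderIsoNest_coe, raisedGF]

theorem raisedGF_nest_succ (h : IsDyckWord l) (m : ℕ) :
    raisedGF (nest l) (m + 1) =
      raisedGF l (m + 1) + qq ^ (Fintype.card (Chord l) + 1) * raisedGF (nest l) m := by
  have pullback := fun k => boundedMonotoneGF_comp_orderIso qq (Chord.withBotOrderIsoNest h)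
    (fun c => c.capacity + k)
  have split_bot := boundedMonotoneGF_withBot_add_one qq
    ((fun c => c.capacity + m) ∘ Chord.withBotOrderIsoNest h)
  simp only [pullback, Function.comp_apply, Chord.capacity_withBotOrderIsoNest_coe,
    add_assoc] at split_bot
  rw [raisedGF, raisedGF, raisedGF, ← split_bot]
  exact (pullback (m + 1)).symm

theorem isEmpty_chord_nil : IsEmpty (Chord []) :=
  ⟨fun c => Nat.not_lt_zero _ c.right_lt_length⟩

theorem IsDyckWord.card_chord (h : IsDyckWord l) : Fintype.card (Chord l) = l.count false := by
  refine h.induction (P := fun l => Fintype.card (Chord l) = l.count false) ?nil ?nest_append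
  case nil => exact Fintype.card_eq_zero_iff.2 isEmpty_chord_nil
  case nest_append =>
    intro l₁ l₂ h₁ _ ih₁ ih₂
    rw [← Fintype.card_congr (Chord.sumOrderIsoAppend l₂ (isDyckWord_nest h₁)).toEquiv,
      Fintype.card_sum,
      ← Fintype.card_congr (Chord.withBotOrderIsoNest h₁).toEquiv, card_withBot, ih₁, ih₂,
      List.count_append, count_false_nest]

theorem IsDyckWord.raisedGF_nest (h : IsDyckWord l)
    (hl : ∀ m, raisedGF l m = qbinom (m + l.count false) m * raisedGF l 0) (m : ℕ) :
    raisedGF (nest l) m =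
      qbinom (m + (nest l).count false) m * raisedGF (nest l) 0 := by
  rw [count_false_nest, raisedGF_nest_zero h]
  induction m with
  | zero => rw [raisedGF_nest_zero h, qbinom_zero_right, one_mul]
  | succ m ih =>
    rw [raisedGF_nest_succ h, h.card_chord, ih, hl (m + 1), qbinom_pascal]
    ring

theorem IsDyckWord.raisedGF_eq (h : IsDyckWord l) (m : ℕ) :
    raisedGF l m = qbinom (m + l.count false) m * raisedGF l 0 := by
  refine h.induction
    (P := fun l => ∀ m, raisedGF l m = qbinom (m + l.count false) m * raisedGF l 0)
    ?nil ?nest_append m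
  case nil =>
    intro m
    have := isEmpty_chord_nil
    rw [List.count_nil, add_zero, qbinom_self, one_mul, raisedGF, raisedGF]
    congr 1
    exact Subsingleton.elim _ _
  case nest_append =>
    intro l₁ l₂ h₁ _ ih₁ ih₂ m
    rw [raisedGF_append (isDyckWord_nest h₁), raisedGF_append (isDyckWord_nest h₁), ih₂,
      h₁.raisedGF_nest ih₁, ih₂ (0 + _), zero_add, List.count_append]
    linear_combination raisedGF (nest l₁) 0 * raisedGF l₂ 0 *
      qbinom_mul m ((nest l₁).count false) (l₂.count false)

end RaisedGF

/-- Paper's Lemma `treefac`: P_{λ₁λ₂} = [n₁+n₂ choose n₁] · P_{λ₁} · P_{λ₂}. -/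
theorem stmt_10 (n1 n2 : ℕ) (l1 l2 : List Bool)
    (h1 : IsDyckWord l1) (h2 : IsDyckWord l2)
    (hl1 : l1.length = 2 * n1) (hl2 : l2.length = 2 * n2) :
    PLSK (l1 ++ l2) = qbinom (n1 + n2) n1 * PLSK l1 * PLSK l2 := by
  simp only [PLSK_eq_raisedGF_zero]
  calc
    raisedGF (l1 ++ l2) 0 = raisedGF l1 0 * raisedGF l2 n1 := by
      rw [raisedGF_append h1, h1.count_false_eq hl1, zero_add]
    _ = raisedGF l1 0 * (qbinom (n1 + n2) n1 * raisedGF l2 0) := by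
      rw [h2.raisedGF_eq n1, h2.count_false_eq hl2]
    _ = qbinom (n1 + n2) n1 * raisedGF l1 0 * raisedGF l2 0 := by ring
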